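/- arXiv:2205.06849 — 3 statements merged into one kernel-verified Lean document; each statement's English description precedes it below -/
import Mathlib

section
/- Let n ≥ 1, α > 0, and let f_* : Γₙ⁺ → (0,∞) be homogeneous of degree one with f_*(1,…,1) = 1. Then z*(ξ,t) = −[(1+α)t]^{1/(1+α)}·√(1−|ξ|²) satisfies the dual flow equation ∂ₜz* = −F_*(A*[z*(·,t)])^{−α}·w* at every (ξ,t) ∈ B₁×(0,∞), and z*(ξ,t) → 0 as |ξ| → 1 for each t and as t → 0⁺ for each ξ. -/
open Real Filter Set

noncomputable section

/-- Partial derivative of `u` in the `i`-th coordinate direction. -/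
def pd (n : ℕ) (u : (Fin n → ℝ) → ℝ) (i : Fin n) (x : Fin n → ℝ) : ℝ :=
  fderiv ℝ u x (Pi.single i 1)

/-- Hessian matrix of `u`. -/
def hess (n : ℕ) (u : (Fin n → ℝ) → ℝ) (x : Fin n → ℝ) : Matrix (Fin n) (Fin n) ℝ :=
  Matrix.of fun i j => pd n (pd n u j) i x

/-- Squared Euclidean norm of the gradient. -/
def gradSq (n : ℕ) (u : (Fin n → ℝ) → ℝ) (x : Fin n → ℝ) : ℝ :=
  ∑ i, (pd n u i x) ^ 2

/-- `w = √(1 - |Du|²)`. -/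
def wF (n : ℕ) (u : (Fin n → ℝ) → ℝ) (x : Fin n → ℝ) : ℝ :=
  Real.sqrt (1 - gradSq n u x)

/-- `γ^{ik} = δ_{ik} + u_i u_k / (w (1 + w))`. -/
def gammaM (n : ℕ) (u : (Fin n → ℝ) → ℝ) (x : Fin n → ℝ) : Matrix (Fin n) (Fin n) ℝ :=
  Matrix.of fun i k =>
    (if i = k then (1 : ℝ) else 0) + pd n u i x * pd n u k x / (wF n u x * (1 + wF n u x))

/-- The principal-curvature matrix `A[u] = (1/w) γ (D²u) γ`. -/
def curvM (n : ℕ) (u : (Fin n → ℝ) → ℝ) (x : Fin n → ℝ) : Matrix (Fin n) (Fin n) ℝ :=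
  (wF n u x)⁻¹ • (gammaM n u x * hess n u x * gammaM n u x)

/-- The positive cone `Γₙ⁺`. -/
def GammaPlus (n : ℕ) : Set (Fin n → ℝ) := {κ | ∀ i, 0 < κ i}

/-- `F(A) = 1 / f_*(κ₁⁻¹, …, κₙ⁻¹)` where `κᵢ` are the eigenvalues of `A`. -/
def Fc (n : ℕ) (fstar : (Fin n → ℝ) → ℝ) (A : Matrix (Fin n) (Fin n) ℝ) : ℝ :=
  if h : A.IsHermitian then 1 / fstar (fun i => (h.eigenvalues i)⁻¹) else 0

/-- `F_*(A) = f_*(eigenvalues of A)`. -/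
def FsM (n : ℕ) (fstar : (Fin n → ℝ) → ℝ) (A : Matrix (Fin n) (Fin n) ℝ) : ℝ :=
  if h : A.IsHermitian then fstar h.eigenvalues else 0

/-- `w* = √(1 - |ξ|²)`. -/
def wS (n : ℕ) (ξ : Fin n → ℝ) : ℝ := Real.sqrt (1 - ∑ i, (ξ i) ^ 2)

/-- `γ*_{ik} = δ_{ik} - ξᵢ ξ_k / (1 + w*)`. -/
def gammaS (n : ℕ) (ξ : Fin n → ℝ) : Matrix (Fin n) (Fin n) ℝ :=
  Matrix.of fun i k => (if i = k then (1 : ℝ) else 0) - ξ i * ξ k / (1 + wS n ξ)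

/-- The dual curvature matrix `A*[u*] = w* γ* (D²u*) γ*`. -/
def dualCurvM (n : ℕ) (ustar : (Fin n → ℝ) → ℝ) (ξ : Fin n → ℝ) :
    Matrix (Fin n) (Fin n) ℝ :=
  wS n ξ • (gammaS n ξ * hess n ustar ξ * gammaS n ξ)

/-- Open Euclidean ball of radius `r` about the origin. -/
def ballE (n : ℕ) (r : ℝ) : Set (Fin n → ℝ) := {ξ | ∑ i, (ξ i) ^ 2 < r ^ 2}

/-- Closed Euclidean ball of radius `r` about the origin. -/
def cballE (n : ℕ) (r : ℝ) : Set (Fin n → ℝ) := {ξ | ∑ i, (ξ i) ^ 2 ≤ r ^ 2}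

/-- Euclidean sphere of radius `r` about the origin. -/
def sphereE (n : ℕ) (r : ℝ) : Set (Fin n → ℝ) := {ξ | ∑ i, (ξ i) ^ 2 = r ^ 2}

/-- The full structural conditions on the curvature function `f_*`. -/
def FullStructural (n : ℕ) (fstar : (Fin n → ℝ) → ℝ) : Prop :=
  ContDiffOn ℝ (⊤ : ℕ∞) fstar (GammaPlus n) ∧
  ConcaveOn ℝ (GammaPlus n) fstar ∧
  (∀ κ ∈ GammaPlus n, 0 < fstar κ) ∧
  (∀ κ ∈ frontier (GammaPlus n), fstar κ = 0) ∧
  (∀ κ ∈ GammaPlus n, ∀ i, 0 < fderiv ℝ fstar κ (Pi.single i 1)) ∧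
  (∀ c : ℝ, 0 < c → ∀ κ ∈ GammaPlus n, fstar (c • κ) = c * fstar κ) ∧
  (∃ ε₀ > (0 : ℝ), ∀ κ ∈ GammaPlus n,
    ε₀ * fstar κ * (∑ i, κ i) ≤ ∑ i, fderiv ℝ fstar κ (Pi.single i 1) * (κ i) ^ 2) ∧
  (∀ C > (0 : ℝ), ∀ E : Set (Fin n → ℝ), IsCompact E → E ⊆ GammaPlus n →
    ∀ i₀ : Fin n, ∃ R > (0 : ℝ), ∀ κ ∈ E, C < fstar (Function.update κ i₀ (κ i₀ + R))) ∧
  fstar (fun _ => 1) = 1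

/-- Conditions A on the initial hypersurface. -/
def ConditionsA (n : ℕ) (u₀ : (Fin n → ℝ) → ℝ) (C₀ C₁ : ℝ) : Prop :=
  ContDiff ℝ (⊤ : ℕ∞) u₀ ∧
  (∀ x, gradSq n u₀ x < 1) ∧
  (∀ x, (hess n u₀ x).PosDef) ∧
  (∀ k : ℕ, ∀ i j : Fin n, ∃ M : ℝ, ∀ x,
      ‖iteratedFDeriv ℝ k (fun y => curvM n u₀ y i j) x‖ ≤ M) ∧
  (∀ x, Real.sqrt ((∑ i, (x i) ^ 2) + C₀) < u₀ x ∧ u₀ x < Real.sqrt ((∑ i, (x i) ^ 2) + C₁))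


lemma hasFDerivAt_Q (n : ℕ) (x : Fin n → ℝ) :
    HasFDerivAt (fun η : Fin n → ℝ => 1 - ∑ i, (η i) ^ 2)
      (-(∑ i, (2 * x i) • (ContinuousLinearMap.proj i : (Fin n → ℝ) →L[ℝ] ℝ))) x := by
  have h : HasFDerivAt (fun η : Fin n → ℝ => ∑ i, (η i) ^ 2)
      (∑ i, (2 * x i) • (ContinuousLinearMap.proj i : (Fin n → ℝ) →L[ℝ] ℝ)) x := by
    apply HasFDerivAt.fun_sum
    intro i _
    have := (hasFDerivAt_apply (𝕜 := ℝ) i x).pow 2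
    simpa using this
  exact h.const_sub 1

lemma Q_apply (n : ℕ) (x : Fin n → ℝ) (j : Fin n) :
    (-(∑ i, (2 * x i) • (ContinuousLinearMap.proj i : (Fin n → ℝ) →L[ℝ] ℝ))) (Pi.single j 1)
      = -(2 * x j) := by
  simp [ContinuousLinearMap.sum_apply, Pi.single_apply]

lemma hasFDerivAt_wS (n : ℕ) (x : Fin n → ℝ) (hx : x ∈ ballE n 1) :
    HasFDerivAt (wS n)
      ((1 / (2 * wS n x)) •
        (-(∑ i, (2 * x i) • (ContinuousLinearMap.proj i : (Fin n → ℝ) →L[ℝ] ℝ)))) x := by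
  have hx' : (1 - ∑ i, (x i) ^ 2) ≠ 0 := by
    simp only [ballE, Set.mem_setOf_eq] at hx
    linarith
  exact (hasFDerivAt_Q n x).sqrt hx'

lemma wS_pos (n : ℕ) (x : Fin n → ℝ) (hx : x ∈ ballE n 1) : 0 < wS n x := by
  simp only [ballE, Set.mem_setOf_eq] at hx
  exact Real.sqrt_pos.2 (by linarith)

lemma wS_sq (n : ℕ) (x : Fin n → ℝ) (hx : x ∈ ballE n 1) :
    wS n x ^ 2 = 1 - ∑ i, (x i) ^ 2 := by
  simp only [ballE, Set.mem_setOf_eq] at hx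
  exact Real.sq_sqrt (by linarith)

lemma isOpen_ballE (n : ℕ) : IsOpen (ballE n 1) :=
  isOpen_lt (by fun_prop) (by fun_prop)

lemma pd_z (n : ℕ) (c : ℝ) (x : Fin n → ℝ) (hx : x ∈ ballE n 1) (j : Fin n) :
    pd n (fun η => -c * wS n η) j x = c * (x j * (wS n x)⁻¹) := by
  have hw := (wS_pos n x hx).ne'
  unfold pd
  rw [((hasFDerivAt_wS n x hx).const_mul (-c)).fderiv]
  rw [ContinuousLinearMap.smul_apply, ContinuousLinearMap.smul_apply, Q_apply]
  simp only [smul_eq_mul]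
  field_simp

lemma hess_z (n : ℕ) (c : ℝ) (x : Fin n → ℝ) (hx : x ∈ ballE n 1) :
    hess n (fun η => -c * wS n η) x =
      (c * (wS n x)⁻¹) • (1 : Matrix (Fin n) (Fin n) ℝ)
        + (c * (wS n x)⁻¹ ^ 3) • Matrix.vecMulVec x x := by
  have hw := (wS_pos n x hx).ne'
  ext i j
  have he : pd n (fun η => -c * wS n η) j =ᶠ[nhds x] fun y => c * (y j * (wS n y)⁻¹) := by
    filter_upwards [(isOpen_ballE n).mem_nhds hx] with y hy
    exact pd_z n c y hy j
  have hinv := (hasDerivAt_inv hw).comp_hasFDerivAt x (hasFDerivAt_wS n x hx)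
  have hm := ((hasFDerivAt_apply (𝕜 := ℝ) j x).mul hinv).const_mul c
  have hm' : HasFDerivAt (fun y : Fin n → ℝ => c * (y j * (wS n y)⁻¹)) _ x := hm
  simp only [hess, Matrix.of_apply]
  rw [pd, he.fderiv_eq, hm'.fderiv]
  simp only [ContinuousLinearMap.smul_apply, ContinuousLinearMap.add_apply, Q_apply,
    Matrix.add_apply, Matrix.smul_apply, Matrix.vecMulVec_apply, smul_eq_mul,
    ContinuousLinearMap.proj_apply, Matrix.one_apply, Pi.single_apply, Function.comp]
  by_cases hij : i = j
  · subst hij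
    simp
    field_simp
    ring
  · simp [hij, Ne.symm hij]
    field_simp

lemma dual_z (n : ℕ) (c : ℝ) (x : Fin n → ℝ) (hx : x ∈ ballE n 1) :
    dualCurvM n (fun η => -c * wS n η) x = c • (1 : Matrix (Fin n) (Fin n) ℝ) := by
  have hw := wS_pos n x hx
  have hs := wS_sq n x hx
  have hg : gammaS n x = 1 - (1 + wS n x)⁻¹ • Matrix.vecMulVec x x := by
    ext i j
    simp [gammaS, Matrix.one_apply, Matrix.vecMulVec_apply]
    ring
  have hV : Matrix.vecMulVec x x * Matrix.vecMulVec x x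
      = (1 - wS n x ^ 2) • Matrix.vecMulVec x x := by
    rw [Matrix.vecMulVec_mul_vecMulVec, hs]
    ext i j
    simp [Matrix.vecMulVec_apply, dotProduct, pow_two]
    try ring
  rw [dualCurvM, hess_z n c x hx, hg]
  generalize Matrix.vecMulVec x x = V at *
  generalize wS n x = w at *
  simp only [sub_mul, mul_sub, add_mul, mul_add, smul_mul_assoc, mul_smul_comm, one_mul, mul_one,
    hV, smul_smul, smul_add, smul_sub]
  have h1 : 1 + w ≠ 0 := by positivity
  have h2 := hw.ne'
  match_scalars
  · field_simp
  · field_simp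
    ring

lemma FsM_smul_one (n : ℕ) (hn : 1 ≤ n) (fstar : (Fin n → ℝ) → ℝ)
    (hhom : ∀ c : ℝ, 0 < c → ∀ κ ∈ GammaPlus n, fstar (c • κ) = c * fstar κ)
    (hnorm : fstar (fun _ => 1) = 1) (c : ℝ) (hc : 0 < c) :
    FsM n fstar (c • (1 : Matrix (Fin n) (Fin n) ℝ)) = c := by
  haveI : NeZero n := ⟨by omega⟩
  have hH : (c • (1 : Matrix (Fin n) (Fin n) ℝ)).IsHermitian := by
    simp [Matrix.IsHermitian]
  have he : hH.eigenvalues = c • (fun _ => (1 : ℝ)) := by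
    ext i
    have := hH.eigenvalues_mem_spectrum_real i
    generalize hH.eigenvalues i = e at this
    rw [← Algebra.algebraMap_eq_smul_one, spectrum.scalar_eq] at this
    simpa using this
  rw [FsM, dif_pos hH, he, hhom c hc _ (by intro i; simp), hnorm, mul_one]

/-- `z*(ξ,t) = −[(1+α)t]^{1/(1+α)}√(1−|ξ|²)` solves the dual flow
`∂ₜz* = −F_*(A*[z*])^{−α} w*` on `B₁×(0,∞)`, vanishes as `|ξ| → 1` for each `t > 0`,
and tends to `0` as `t → 0⁺` for each `ξ`. -/
theorem statement6 (n : ℕ) (hn : 1 ≤ n) (α : ℝ) (hα : 0 < α)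
    (fstar : (Fin n → ℝ) → ℝ)
    (hpos : ∀ κ ∈ GammaPlus n, 0 < fstar κ)
    (hhom : ∀ c : ℝ, 0 < c → ∀ κ ∈ GammaPlus n, fstar (c • κ) = c * fstar κ)
    (hnorm : fstar (fun _ => 1) = 1)
    (zstar : (Fin n → ℝ) → ℝ → ℝ)
    (hz : zstar = fun ξ t =>
      -(((1 + α) * t) ^ ((1 : ℝ) / (1 + α))) * Real.sqrt (1 - ∑ i, (ξ i) ^ 2)) :
    (∀ ξ ∈ ballE n 1, ∀ t : ℝ, 0 < t →
      HasDerivAt (fun s => zstar ξ s)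
        (-(FsM n fstar (dualCurvM n (fun η => zstar η t) ξ)) ^ (-α) * wS n ξ) t) ∧
    (∀ t > (0 : ℝ), ∀ ε > (0 : ℝ), ∃ δ > (0 : ℝ), ∀ ξ ∈ ballE n 1,
      1 - δ < Real.sqrt (∑ i, (ξ i) ^ 2) → |zstar ξ t| < ε) ∧
    (∀ ξ ∈ ballE n 1,
      Tendsto (fun t => zstar ξ t) (nhdsWithin 0 (Set.Ioi 0)) (nhds 0)) := by
  have hz' : ∀ ξ t, zstar ξ t = -(((1 + α) * t) ^ ((1 : ℝ) / (1 + α))) * wS n ξ := by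
    intro ξ t; rw [hz]; rfl
  have ha : (1 + α) ≠ 0 := by positivity
  refine ⟨?_, ?_, ?_⟩
  · intro ξ hξ t ht
    have hb : 0 < (1 + α) * t := by positivity
    have hc : 0 < ((1 + α) * t) ^ ((1 : ℝ) / (1 + α)) := Real.rpow_pos_of_pos hb _
    simp only [hz']
    rw [dual_z n _ ξ hξ, FsM_smul_one n hn fstar hhom hnorm _ hc]
    have h1 : HasDerivAt (fun s : ℝ => (1 + α) * s) (1 + α) t := by
      simpa using (hasDerivAt_id t).const_mul (1 + α)
    have h2 := ((h1.rpow_const (p := (1 : ℝ) / (1 + α)) (Or.inl hb.ne')).neg).mul_const (wS n ξ)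
    refine h2.congr_deriv ?_
    rw [← Real.rpow_mul hb.le]
    have : (1 : ℝ) / (1 + α) - 1 = 1 / (1 + α) * -α := by field_simp; ring
    rw [this]
    field_simp
  · intro t ht ε hε
    have hb : 0 < (1 + α) * t := by positivity
    have hc : 0 < ((1 + α) * t) ^ ((1 : ℝ) / (1 + α)) := Real.rpow_pos_of_pos hb _
    simp only [hz']
    generalize ((1 + α) * t) ^ ((1 : ℝ) / (1 + α)) = c at *
    refine ⟨(ε / c) ^ 2 / 2, by positivity, ?_⟩
    intro ξ hξ hd
    have hw := wS_pos n ξ hξ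
    have hs := wS_sq n ξ hξ
    have h0 : 0 ≤ ∑ i, (ξ i) ^ 2 := Finset.sum_nonneg fun i _ => sq_nonneg _
    have hr := Real.sq_sqrt h0
    set r := Real.sqrt (∑ i, (ξ i) ^ 2)
    have hlt : wS n ξ ^ 2 < (ε / c) ^ 2 := by
      rw [hs, ← hr]
      nlinarith [sq_nonneg (r - 1)]
    have := lt_of_pow_lt_pow_left₀ 2 (by positivity) hlt
    rw [abs_mul, abs_neg, abs_of_pos hc, abs_of_pos hw]
    rwa [lt_div_iff₀' hc] at this
  · intro ξ hξ
    simp only [hz']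
    have hp : 0 < (1 : ℝ) / (1 + α) := by positivity
    have h1 : Continuous (fun t : ℝ => -(((1 + α) * t) ^ ((1 : ℝ) / (1 + α))) * wS n ξ) := by
      have : Continuous (fun t : ℝ => ((1 + α) * t) ^ ((1 : ℝ) / (1 + α))) :=
        Continuous.rpow_const (by fun_prop) (fun _ => Or.inr hp.le)
      exact this.neg.mul continuous_const
    have h2 := (h1.tendsto 0).mono_left (nhdsWithin_le_nhds (s := Set.Ioi 0))
    simpa [Real.zero_rpow (inv_ne_zero ha)] using h2

end
end

section
/- Let n ≥ 1, α > 0, a₁ > 1, and let f_* : Γₙ⁺ → (0,∞) be homogeneous of degree one with f_*(1,…,1) = 1. Set t̃ = t + (1+α)⁻¹. Then the function v(ξ,t) = −a₁[(1+α)t̃]^{1/(1+α)}·√(1−|ξ|²) is a strict subsolution of the dual flow: ∂ₜv < −F_*(A*[v(·,t)])^{−α}·w* at every (ξ,t) ∈ B₁×(0,∞). -/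
open Real Filter Set

noncomputable section

lemma aux_eig (n : ℕ) (c : ℝ) (A : Matrix (Fin n) (Fin n) ℝ) (hA : A = c • 1)
    (h : A.IsHermitian) : h.eigenvalues = fun _ => c := by
  funext i
  have h1 := h.mulVec_eigenvectorBasis i
  have h2 : A.mulVec (h.eigenvectorBasis i) = c • (h.eigenvectorBasis i : Fin n → ℝ) := by
    have h0 : ∀ u : Fin n → ℝ, A.mulVec u = c • u := fun u => by
      rw [hA, Matrix.smul_mulVec, Matrix.one_mulVec]
    exact h0 _
  rw [h2] at h1
  have h3 : h.eigenvectorBasis i ≠ 0 := h.eigenvectorBasis.orthonormal.ne_zero i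
  obtain ⟨j, hj⟩ : ∃ j, (h.eigenvectorBasis i) j ≠ 0 := by
    by_contra hh
    push Not at hh
    exact h3 (by ext j; simpa using hh j)
  have h4 := congrFun h1 j
  simp only [Pi.smul_apply, smul_eq_mul] at h4
  exact (mul_right_cancel₀ hj h4).symm

lemma aux_sq (n : ℕ) (x : Fin n → ℝ) :
    HasFDerivAt (fun η : Fin n → ℝ => 1 - ∑ i, (η i) ^ 2)
      (-∑ i, (2 * x i) • ContinuousLinearMap.proj (R := ℝ) (φ := fun _ : Fin n => ℝ) i) x := by
  refine HasFDerivAt.const_sub ?_ 1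
  refine HasFDerivAt.fun_sum fun i _ => ?_
  have := (ContinuousLinearMap.proj (R := ℝ) (φ := fun _ : Fin n => ℝ) i).hasFDerivAt (x := x)
  simpa using this.pow 2

lemma aux_w (n : ℕ) (x : Fin n → ℝ) (hx : ∑ i, (x i) ^ 2 < 1) :
    HasFDerivAt (wS n) ((1 / (2 * wS n x)) •
      (-∑ i, (2 * x i) • ContinuousLinearMap.proj (R := ℝ) (φ := fun _ : Fin n => ℝ) i)) x :=
  (aux_sq n x).sqrt (by linarith)

lemma aux_lin (n : ℕ) (x : Fin n → ℝ) (j : Fin n) :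
    (-∑ i, (2 * x i) • ContinuousLinearMap.proj (R := ℝ) (φ := fun _ : Fin n => ℝ) i)
      (Pi.single j (1 : ℝ)) = - (2 * x j) := by
  simp [ContinuousLinearMap.sum_apply, Pi.single_apply]

lemma aux_wpos (n : ℕ) (x : Fin n → ℝ) (hx : ∑ i, (x i) ^ 2 < 1) : 0 < wS n x :=
  Real.sqrt_pos.2 (by linarith)

lemma aux_pd (n : ℕ) (c : ℝ) (x : Fin n → ℝ) (hx : ∑ i, (x i) ^ 2 < 1) (j : Fin n) :
    pd n (fun η => -c * wS n η) j x = c * x j / wS n x := by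
  have hw := aux_wpos n x hx
  unfold pd
  rw [((aux_w n x hx).const_mul (-c)).fderiv]
  simp only [ContinuousLinearMap.smul_apply, aux_lin, smul_eq_mul]
  field_simp

lemma aux_hess (n : ℕ) (c : ℝ) (x : Fin n → ℝ) (hx : ∑ i, (x i) ^ 2 < 1) (i j : Fin n) :
    hess n (fun η => -c * wS n η) x i j =
      c * ((if i = j then (1 : ℝ) else 0) / wS n x + x i * x j / wS n x ^ 3) := by
  have hw := aux_wpos n x hx
  have hopen : IsOpen {y : Fin n → ℝ | ∑ i, (y i) ^ 2 < 1} :=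
    isOpen_lt (by fun_prop) continuous_const
  have hev : pd n (fun η => -c * wS n η) j =ᶠ[nhds x] fun y => (c * y j) * (wS n y)⁻¹ := by
    filter_upwards [hopen.mem_nhds hx] with y hy
    rw [aux_pd n c y hy j, div_eq_mul_inv]
  have hp := (ContinuousLinearMap.proj (R := ℝ) (φ := fun _ : Fin n => ℝ) j).hasFDerivAt (x := x)
  have hd := (hp.const_mul c).mul ((hasDerivAt_inv hw.ne').comp_hasFDerivAt x (aux_w n x hx))
  have hd' := hd.congr_of_eventuallyEq hev
  simp only [hess, Matrix.of_apply]
  rw [pd, hd'.fderiv]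
  simp only [ContinuousLinearMap.add_apply, ContinuousLinearMap.smul_apply, aux_lin, smul_eq_mul,
    ContinuousLinearMap.proj_apply, Pi.single_apply, eq_comm (a := j),
    Function.comp_apply]
  split_ifs <;> field_simp <;> ring

lemma aux_dual (n : ℕ) (c : ℝ) (x : Fin n → ℝ) (hx : ∑ i, (x i) ^ 2 < 1) :
    dualCurvM n (fun η => -c * wS n η) x = c • (1 : Matrix (Fin n) (Fin n) ℝ) := by
  have hw := aux_wpos n x hx
  have hs : ∑ i, x i ^ 2 = 1 - wS n x ^ 2 := by
    rw [wS, Real.sq_sqrt (by linarith)]; ring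
  have hdot : x ⬝ᵥ x = 1 - wS n x ^ 2 := by
    rw [← hs]; simp [dotProduct, sq]
  have hP : Matrix.vecMulVec x x * Matrix.vecMulVec x x
      = (1 - wS n x ^ 2) • Matrix.vecMulVec x x := by
    rw [Matrix.vecMulVec_mul_vecMulVec, hdot]
    ext i j; simp [Matrix.vecMulVec_apply]; try ring
  have hG : gammaS n x = 1 - (1 / (1 + wS n x)) • Matrix.vecMulVec x x := by
    ext i j; simp [gammaS, Matrix.vecMulVec_apply, Matrix.one_apply]; ring
  have hH : hess n (fun η => -c * wS n η) x =
      (c / wS n x) • 1 + (c / wS n x ^ 3) • Matrix.vecMulVec x x := by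
    ext i j
    rw [aux_hess n c x hx]
    simp [Matrix.vecMulVec_apply, Matrix.one_apply]
    split_ifs <;> ring
  rw [dualCurvM, hG, hH]
  generalize wS n x = w at *
  generalize Matrix.vecMulVec x x = P at *
  have h1 : (1 : ℝ) + w ≠ 0 := by positivity
  simp only [sub_mul, mul_sub, add_mul, mul_add, Matrix.one_mul, Matrix.mul_one,
    Matrix.smul_mul, Matrix.mul_smul, hP, smul_smul, smul_add, smul_sub]
  match_scalars <;> field_simp
  ring

/-- With `t̃ = t + (1+α)⁻¹` and `a₁ > 1`, the function
`v(ξ,t) = −a₁[(1+α)t̃]^{1/(1+α)}√(1−|ξ|²)` is a strict subsolution of the dual flow: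
`∂ₜv < −F_*(A*[v])^{−α} w*` on `B₁ × (0,∞)`. -/
theorem statement8 (n : ℕ) (hn : 1 ≤ n) (α : ℝ) (hα : 0 < α)
    (a₁ : ℝ) (ha₁ : 1 < a₁)
    (fstar : (Fin n → ℝ) → ℝ)
    (hpos : ∀ κ ∈ GammaPlus n, 0 < fstar κ)
    (hhom : ∀ c : ℝ, 0 < c → ∀ κ ∈ GammaPlus n, fstar (c • κ) = c * fstar κ)
    (hnorm : fstar (fun _ => 1) = 1)
    (v : (Fin n → ℝ) → ℝ → ℝ)
    (hv : v = fun ξ t =>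
      -a₁ * (((1 + α) * (t + (1 + α)⁻¹)) ^ ((1 : ℝ) / (1 + α))) *
        Real.sqrt (1 - ∑ i, (ξ i) ^ 2)) :
    ∀ ξ ∈ ballE n 1, ∀ t : ℝ, 0 < t →
      deriv (fun s => v ξ s) t
        < -(FsM n fstar (dualCurvM n (fun η => v η t) ξ)) ^ (-α) * wS n ξ := by
  intro ξ hξ t ht
  have hx : ∑ i, (ξ i) ^ 2 < 1 := by simpa [ballE] using hξ
  have hw := aux_wpos n ξ hx
  have hα1 : (0 : ℝ) < 1 + α := by linarith
  set T : ℝ := (1 + α) * (t + (1 + α)⁻¹) with hT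
  have hTpos : 0 < T := by positivity
  set c : ℝ := a₁ * T ^ ((1 : ℝ) / (1 + α)) with hc
  have hcpos : 0 < c := by positivity
  have hvt : (fun η => v η t) = fun η => -c * wS n η := by
    funext η
    rw [hv]
    simp only [wS, hc, hT]
    ring
  have hA := aux_dual n c ξ hx
  have hF : FsM n fstar (dualCurvM n (fun η => v η t) ξ) = c := by
    rw [hvt, hA]
    have hH : (c • (1 : Matrix (Fin n) (Fin n) ℝ)).IsHermitian := by
      simp [Matrix.IsHermitian]
    rw [FsM, dif_pos hH, aux_eig n c _ rfl hH]
    have := hhom c hcpos (fun _ => 1) (fun _ => one_pos)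
    rw [hnorm, mul_one] at this
    have he : (c • fun _ : Fin n => (1 : ℝ)) = fun _ => c := by
      funext i
      simp
    rwa [he] at this
  rw [hF]
  have hd0 : HasDerivAt (fun s : ℝ => (1 + α) * (s + (1 + α)⁻¹)) (1 + α) t := by
    simpa using ((hasDerivAt_id t).add_const ((1 + α)⁻¹)).const_mul (1 + α)
  have hd1 := ((hd0.rpow_const (p := (1 : ℝ) / (1 + α)) (Or.inl hTpos.ne')).const_mul
    (-a₁)).mul_const (wS n ξ)
  have hd2 : deriv (fun s => v ξ s) t = -(a₁ * T ^ ((1 : ℝ) / (1 + α) - 1)) * wS n ξ := by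
    have : (fun s => v ξ s) = fun s =>
      -a₁ * (((1 + α) * (s + (1 + α)⁻¹)) ^ ((1 : ℝ) / (1 + α))) * wS n ξ := by
      rw [hv]; rfl
    rw [this, hd1.deriv, ← hT]
    field_simp
  rw [hd2]
  have hcα : c ^ (-α) = a₁ ^ (-α) * T ^ ((1 : ℝ) / (1 + α) - 1) := by
    rw [hc, Real.mul_rpow (by linarith) (by positivity), ← Real.rpow_mul hTpos.le]
    congr 2
    field_simp
    ring
  rw [hcα]
  have hlt : a₁ ^ (-α) < a₁ :=
    (Real.rpow_lt_one_of_one_lt_of_neg ha₁ (by linarith)).trans ha₁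
  have hTp : 0 < T ^ ((1 : ℝ) / (1 + α) - 1) := by positivity
  have := mul_lt_mul_of_pos_right hlt hTp
  exact mul_lt_mul_of_pos_right (neg_lt_neg this) hw


end
end

section
/- Let n ≥ 2, 0 < r < 1, A, B, T > 0, and let u be a convex C² function on the closed ball B̄ᵣ ⊂ ℝⁿ such that u(ξ) ≥ −A·T·√(1−|ξ|²) − B·T for all ξ ∈ Bᵣ and u(ξ) ≤ −B·T for all ξ ∈ ∂Bᵣ. Then for every point ξ = (ξ₁, 0, …, 0) with 0 < ξ₁ < r, the second angular derivative ∂²u(ξ) = ξ₁²·u₂₂(ξ) − ξ₁·u₁(ξ) (where ∂ = ξ₁∂/∂ξ₂ − ξ₂∂/∂ξ₁) satisfies (r − ξ₁)·∂²u(ξ) ≥ −A·T·ξ₁·√(1−ξ₁²). In particular (r−|ξ|)·∂²u/√(1−|ξ|²) ≥ −A·T·|ξ| at such points. -/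
open Real Filter Set

noncomputable section

theorem tangent_aux (n : ℕ) (s : Set (Fin n → ℝ)) (u : (Fin n → ℝ) → ℝ)
    (hc : ConvexOn ℝ s u) (x y : Fin n → ℝ) (hx : x ∈ s) (hy : y ∈ s)
    (hd : DifferentiableAt ℝ u x) : fderiv ℝ u x (y - x) ≤ u y - u x := by
  have hline : HasDerivAt (fun t : ℝ => AffineMap.lineMap x y t) (y - x) (0 : ℝ) :=
    AffineMap.hasDerivAt_lineMap
  have hx0 : AffineMap.lineMap x y (0 : ℝ) = x := AffineMap.lineMap_apply_zero x y
  have hv : HasDerivAt (fun t : ℝ => u (AffineMap.lineMap x y t)) (fderiv ℝ u x (y - x)) 0 := by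
    have h1 : HasFDerivAt u (fderiv ℝ u x) (AffineMap.lineMap x y (0 : ℝ)) := by
      rw [hx0]; exact hd.hasFDerivAt
    exact h1.comp_hasDerivAt (0 : ℝ) hline
  have hcv : ConvexOn ℝ (Set.Icc (0 : ℝ) 1) (fun t : ℝ => u (AffineMap.lineMap x y t)) := by
    refine (hc.comp_affineMap (AffineMap.lineMap x y)).subset ?_ (convex_Icc 0 1)
    intro t ht
    exact hc.1.lineMap_mem hx hy ht
  have := hcv.le_slope_of_hasDerivAt (x := 0) (y := 1) (by simp) (by simp) one_pos hv
  simpa [slope_def_field] using this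

theorem isOpen_ballE_aux (n : ℕ) (r : ℝ) : IsOpen (ballE n r) :=
  isOpen_lt (by fun_prop) continuous_const

/-- Lower bound for the second angular derivative of a convex function
with barrier bounds: at `ξ = (ξ₁,0,…,0)` with `0 < ξ₁ < r`,
`(r − ξ₁)·(ξ₁² u₂₂(ξ) − ξ₁ u₁(ξ)) ≥ −A T ξ₁ √(1−ξ₁²)`. -/
theorem statement18 (n : ℕ) (hn : 2 ≤ n) (r A B T : ℝ)
    (hr : 0 < r) (hr1 : r < 1) (hA : 0 < A) (hB : 0 < B) (hT : 0 < T)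
    (u : (Fin n → ℝ) → ℝ) (hu : ContDiffOn ℝ 2 u (cballE n r))
    (hconv : ConvexOn ℝ (cballE n r) u)
    (hlow : ∀ ξ ∈ ballE n r,
      -A * T * Real.sqrt (1 - ∑ i, (ξ i) ^ 2) - B * T ≤ u ξ)
    (hup : ∀ ξ ∈ sphereE n r, u ξ ≤ -B * T) :
    ∀ ξ₁ : ℝ, 0 < ξ₁ → ξ₁ < r →
      -A * T * ξ₁ * Real.sqrt (1 - ξ₁ ^ 2) ≤
        (r - ξ₁) *
          (ξ₁ ^ 2 * hess n u (fun i => if i = (⟨0, by omega⟩ : Fin n) then ξ₁ else 0)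
              ⟨1, by omega⟩ ⟨1, by omega⟩
            - ξ₁ * pd n u ⟨0, by omega⟩
                (fun i => if i = (⟨0, by omega⟩ : Fin n) then ξ₁ else 0)) := by
  intro a ha har
  set x : Fin n → ℝ := (fun i => if i = (⟨0, by omega⟩ : Fin n) then a else 0) with hx
  set e0 : Fin n := ⟨0, by omega⟩ with he0
  set e1 : Fin n := ⟨1, by omega⟩ with he1
  have hsub : ballE n r ⊆ cballE n r := fun z (hz : ∑ i, (z i) ^ 2 < r ^ 2) =>
    show ∑ i, (z i) ^ 2 ≤ r ^ 2 from hz.le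
  have hdiff : ∀ z ∈ ballE n r, DifferentiableAt ℝ u z := fun z hz =>
    (hu.contDiffAt (Filter.mem_of_superset ((isOpen_ballE_aux n r).mem_nhds hz) hsub)).differentiableAt
      (by norm_num)
  have hsum : ∀ c : ℝ, ∑ i, (if i = e0 then c else 0 : ℝ) ^ 2 = c ^ 2 := by
    intro c; simp [ite_pow]
  have hxb : x ∈ ballE n r := by
    change ∑ i, (x i) ^ 2 < r ^ 2
    rw [hx, hsum]; nlinarith
  have h22 : 0 ≤ hess n u x e1 e1 := by
    change 0 ≤ fderiv ℝ (pd n u e1) x (Pi.single e1 1)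
    by_cases hd : DifferentiableAt ℝ (pd n u e1) x
    swap
    · rw [fderiv_zero_of_not_differentiableAt hd]; simp
    set p : ℝ → (Fin n → ℝ) := fun t => x + t • Pi.single e1 1 with hp
    have hp0 : p 0 = x := by simp [hp]
    have hpd : HasDerivAt p (Pi.single e1 1) 0 := by
      have h0 := ((hasDerivAt_id (0 : ℝ)).smul_const
        (Pi.single e1 (1 : ℝ) : Fin n → ℝ)).const_add x
      rw [one_smul] at h0
      exact h0
    have hg : HasDerivAt (fun t => pd n u e1 (p t)) (fderiv ℝ (pd n u e1) x (Pi.single e1 1)) 0 := by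
      have h1 : HasFDerivAt (pd n u e1) (fderiv ℝ (pd n u e1) x) (p 0) := by
        rw [hp0]; exact hd.hasFDerivAt
      exact h1.comp_hasDerivAt (0 : ℝ) hpd
    have ht := hg.tendsto_slope_zero_right
    refine ge_of_tendsto ht ?_
    have hev : ∀ᶠ t in nhds (0 : ℝ), p t ∈ ballE n r := by
      apply hpd.continuousAt.eventually_mem
      rw [hp0]; exact (isOpen_ballE_aux n r).mem_nhds hxb
    filter_upwards [nhdsWithin_le_nhds hev, self_mem_nhdsWithin] with t htb htp
    have htp : 0 < t := htp
    have k1 := tangent_aux n _ u hconv x (p t) (hsub hxb) (hsub htb) (hdiff _ hxb)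
    have k2 := tangent_aux n _ u hconv (p t) x (hsub htb) (hsub hxb) (hdiff _ htb)
    have e : p t - x = t • Pi.single e1 1 := by simp [hp]
    have e' : x - p t = -(t • Pi.single e1 1) := by simp [hp]
    rw [e, map_smul, smul_eq_mul] at k1
    rw [e', map_neg, map_smul, smul_eq_mul] at k2
    simp only [zero_add, hp0, smul_eq_mul]
    change 0 ≤ t⁻¹ * (fderiv ℝ u (p t) (Pi.single e1 1) - fderiv ℝ u x (Pi.single e1 1))
    refine mul_nonneg (inv_nonneg.mpr htp.le) ?_
    by_contra hneg
    nlinarith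
  have h1 : (r - a) * pd n u e0 x ≤ A * T * Real.sqrt (1 - a ^ 2) := by
    set y : Fin n → ℝ := fun i => if i = e0 then r else 0 with hy
    have hys : y ∈ sphereE n r := hsum r
    have hyc : y ∈ cballE n r := show ∑ i, (y i) ^ 2 ≤ r ^ 2 from le_of_eq hys
    have k := tangent_aux n _ u hconv x y (hsub hxb) hyc (hdiff _ hxb)
    have e : y - x = (r - a) • Pi.single e0 1 := by
      ext i
      by_cases hi : i = e0
      · subst hi; simp [hx, hy]
      · simp [hx, hy, hi]
    rw [e, map_smul, smul_eq_mul] at k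
    have l := hlow x hxb
    have m := hup y hys
    have hs : ∑ i, (x i) ^ 2 = a ^ 2 := hsum a
    rw [hs] at l
    change (r - a) * fderiv ℝ u x (Pi.single e0 1) ≤ _
    linarith
  have h2 := mul_le_mul_of_nonneg_left h1 ha.le
  have h3 : 0 ≤ (r - a) * (a ^ 2 * hess n u x e1 e1) :=
    mul_nonneg (by linarith) (mul_nonneg (sq_nonneg a) h22)
  linarith

end
end
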